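/- For all g, h ∈ Sp(V): p_{gh} = p_g ∘ (1 − T̂_g∘T_h) ∘ p_h; in particular 1 − T̂_g∘T_h is invertible, and T_{gh} = T_g + (p_gᵗ)⁻¹ ∘ T_h ∘ (1 − T̂_g∘T_h)⁻¹ ∘ p_g⁻¹. -/

import Mathlib

open scoped RealInnerProductSpace

/-!
Let `p_g` and `q_g` be the parts of `g` commuting and anticommuting with `J`. Comparing parts in a
product gives `p_{gh} = p_g p_h + q_g q_h` and `q_{gh} = p_g q_h + q_g p_h`. For symplectic `g`, the
inverse `g⁻¹ = -J gᵗ J` has the parts `p_gᵗ` and `-q_gᵗ`, so `g g⁻¹ = 1 = g⁻¹ g` splits into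
`p_g p_gᵗ = 1 + q_g q_gᵗ`, `p_gᵗ p_g = 1 + q_gᵗ q_g` and `p_g q_gᵗ = q_g p_gᵗ`. The first two make
`p_g` invertible; the first and the third then read `p_g + q_g T̂_g = (p_gᵗ)⁻¹` and
`p_g T̂_g = -q_g`, and both formulas follow. All this happens in a *-ring where every `1 + aᵗ a` is
invertible, such as the bounded operators on a real Hilbert space of any dimension.
-/

section Parts

variable {R A : Type*} [Field R] [Ring A] [Algebra R A] {J : A}

variable (R) in
/-- The part `p_g = ½(g - J g J)` of `g` that commutes with a complex structure `J`. -/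
def linearPart (J g : A) : A :=
  (2⁻¹ : R) • (g - J * g * J)

variable (R) in
/-- The part `q_g = ½(g + J g J)` of `g` that anticommutes with a complex structure `J`.
Anticommutation is expressed throughout as `SemiconjBy _ J (-J)`. -/
def antilinearPart (J g : A) : A :=
  (2⁻¹ : R) • (g + J * g * J)

variable (R) in
/-- The map `T_g = q_g p_g⁻¹`. As `Ring.inverse` is `0` outside the units, it is `0` unless `p_g`
is invertible, which `isUnit_linearPart` ensures for symplectic `g`. -/
noncomputable def antilinearRatio (J g : A) : A :=
  antilinearPart R J g * Ring.inverse (linearPart R J g)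

theorem antilinearRatio_mul_linearPart {g : A} (hp : IsUnit (linearPart R J g)) :
    antilinearRatio R J g * linearPart R J g = antilinearPart R J g :=
  Ring.inverse_mul_cancel_right _ _ hp

theorem linearPart_commute (hJ : J * J = -1) (g : A) : Commute (linearPart R J g) J := by
  refine Commute.smul_left (?_ : (g - J * g * J) * J = J * (g - J * g * J)) _
  calc (g - J * g * J) * J = g * J - J * g * (J * J) := by noncomm_ring
    _ = J * g - J * J * g * J := by rw [hJ]; noncomm_ring
    _ = J * (g - J * g * J) := by noncomm_ring

theorem antilinearPart_semiconjBy (hJ : J * J = -1) (g : A) :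
    SemiconjBy (antilinearPart R J g) J (-J) := by
  have h : (g + J * g * J) * J = -J * (g + J * g * J) := by
    calc (g + J * g * J) * J = g * J + J * g * (J * J) := by noncomm_ring
      _ = -J * g - J * J * g * J := by rw [hJ]; noncomm_ring
      _ = -J * (g + J * g * J) := by noncomm_ring
  rw [SemiconjBy, antilinearPart, smul_mul_assoc, h, mul_smul_comm]

theorem parts_mul_commute (hJ : J * J = -1) (g h : A) :
    Commute
      (linearPart R J g * linearPart R J h + antilinearPart R J g * antilinearPart R J h) J := by
  have hqq : SemiconjBy (antilinearPart R J g * antilinearPart R J h) J (- -J) :=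
    (antilinearPart_semiconjBy hJ g).neg_right.mul_left (antilinearPart_semiconjBy hJ h)
  rw [neg_neg] at hqq
  exact ((linearPart_commute hJ g).mul_left (linearPart_commute hJ h)).add_left hqq

theorem parts_mul_semiconjBy (hJ : J * J = -1) (g h : A) :
    SemiconjBy
      (linearPart R J g * antilinearPart R J h + antilinearPart R J g * linearPart R J h) J (-J) :=
  (SemiconjBy.mul_left (SemiconjBy.neg_right (linearPart_commute hJ g))
    (antilinearPart_semiconjBy hJ h)).add_left
    ((antilinearPart_semiconjBy hJ g).mul_left (linearPart_commute hJ h))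

variable [NeZero (2 : R)]

theorem linearPart_add_antilinearPart (J g : A) :
    linearPart R J g + antilinearPart R J g = g := by
  rw [linearPart, antilinearPart, ← smul_add, sub_add_add_cancel, ← two_smul R g,
    inv_smul_smul₀ two_ne_zero]

theorem linearPart_eq_of_eq_add (hJ : J * J = -1) {g a b : A} (hg : g = a + b)
    (ha : Commute a J) (hb : SemiconjBy b J (-J)) : linearPart R J g = a := by
  have h : g - J * g * J = (2 : R) • a := by
    calc g - J * g * J = a + b - (J * a * J + J * (b * J)) := by rw [hg]; noncomm_ring
      _ = a + b - (a * (J * J) - J * J * b) := by rw [← ha.eq, hb.eq]; noncomm_ring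
      _ = (2 : R) • a := by rw [hJ, two_smul]; noncomm_ring
  rw [linearPart, h, inv_smul_smul₀ two_ne_zero]

theorem antilinearPart_eq_of_eq_add (hJ : J * J = -1) {g a b : A} (hg : g = a + b)
    (ha : Commute a J) (hb : SemiconjBy b J (-J)) : antilinearPart R J g = b := by
  have h := linearPart_add_antilinearPart (R := R) J g
  rw [linearPart_eq_of_eq_add hJ hg ha hb] at h
  exact add_left_cancel (h.trans hg)

theorem linearPart_one (hJ : J * J = -1) : linearPart R J 1 = 1 :=
  linearPart_eq_of_eq_add hJ (add_zero 1).symm (Commute.one_left J) (by simp [SemiconjBy])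

theorem antilinearPart_one (hJ : J * J = -1) : antilinearPart R J 1 = 0 :=
  antilinearPart_eq_of_eq_add hJ (add_zero 1).symm (Commute.one_left J) (by simp [SemiconjBy])

theorem mul_eq_parts_add_parts (J g h : A) :
    g * h =
      (linearPart R J g * linearPart R J h + antilinearPart R J g * antilinearPart R J h) +
        (linearPart R J g * antilinearPart R J h + antilinearPart R J g * linearPart R J h) := by
  nth_rw 1 [← linearPart_add_antilinearPart (R := R) J g,
    ← linearPart_add_antilinearPart (R := R) J h]
  noncomm_ring

theorem linearPart_mul (hJ : J * J = -1) (g h : A) :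
    linearPart R J (g * h) =
      linearPart R J g * linearPart R J h + antilinearPart R J g * antilinearPart R J h :=
  linearPart_eq_of_eq_add hJ (mul_eq_parts_add_parts J g h) (parts_mul_commute hJ g h)
    (parts_mul_semiconjBy hJ g h)

theorem antilinearPart_mul (hJ : J * J = -1) (g h : A) :
    antilinearPart R J (g * h) =
      linearPart R J g * antilinearPart R J h + antilinearPart R J g * linearPart R J h :=
  antilinearPart_eq_of_eq_add hJ (mul_eq_parts_add_parts J g h) (parts_mul_commute hJ g h)
    (parts_mul_semiconjBy hJ g h)

end Parts

section Symplectic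

variable {A : Type*} [Ring A] [StarRing A]

/-- The group `Sp` of invertible `g` with `gᵗ J g = J`, where the involution `star` is the
transpose; for endomorphisms this says that `g` preserves the form `⟪J u, v⟫`. -/
def symplecticGroup (J : A) : Subgroup Aˣ where
  carrier := {g | star (g : A) * J * g = J}
  one_mem' := by simp
  mul_mem' {g h} hg hh := by
    calc star ((g * h : Aˣ) : A) * J * (g * h : Aˣ)
        = star (h : A) * (star (g : A) * J * g) * h := by
          simp only [Units.val_mul, star_mul, mul_assoc]
      _ = J := by rw [hg, hh]
  inv_mem' {g} hg := by
    calc star ((g⁻¹ : Aˣ) : A) * J * (g⁻¹ : Aˣ)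
        = star ((g⁻¹ : Aˣ) : A) * (star (g : A) * J * g) * (g⁻¹ : Aˣ) := by rw [hg]
      _ = star ((g * g⁻¹ : Aˣ) : A) * J * (g * g⁻¹ : Aˣ) := by
          simp only [Units.val_mul, star_mul, mul_assoc]
      _ = J := by simp

theorem coe_inv_of_mem_symplecticGroup {J : A} (hJ : J * J = -1) {g : Aˣ}
    (hg : g ∈ symplecticGroup J) : ((g⁻¹ : Aˣ) : A) = -(J * star (g : A) * J) := by
  refine Units.inv_eq_of_mul_eq_one_left ?_
  calc -(J * star (g : A) * J) * g = -(J * (star (g : A) * J * g)) := by noncomm_ring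
    _ = 1 := by rw [show star (g : A) * J * g = J from hg, hJ, neg_neg]

variable {R : Type*} [Field R] [Algebra R A] {J : A} (hJ : J * J = -1) (hJs : star J = -J)
include hJ hJs

theorem star_linearPart_commute (x : A) : Commute (star (linearPart R J x)) J := by
  have h := congrArg star (linearPart_commute (R := R) hJ x).eq
  simp only [star_mul, hJs, neg_mul, mul_neg, neg_inj] at h
  exact h.symm

theorem star_antilinearPart_semiconjBy (x : A) :
    SemiconjBy (star (antilinearPart R J x)) J (-J) := by
  have h := congrArg star (antilinearPart_semiconjBy (R := R) hJ x).eq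
  simp only [star_mul, star_neg, hJs, neg_mul, mul_neg, neg_neg] at h
  rw [SemiconjBy, ← h, neg_mul]

variable [NeZero (2 : R)] {g : Aˣ} (hg : g ∈ symplecticGroup J)
include hg

theorem coe_inv_eq_star_parts :
    ((g⁻¹ : Aˣ) : A) = star (linearPart R J g) + -star (antilinearPart R J g) := by
  set p := linearPart R J g
  set q := antilinearPart R J g
  have hp : star p * J = J * star p := star_linearPart_commute hJ hJs (g : A)
  have hq : star q * J = -J * star q := star_antilinearPart_semiconjBy hJ hJs (g : A)
  calc ((g⁻¹ : Aˣ) : A) = -(J * star (p + q) * J) := by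
        rw [coe_inv_of_mem_symplecticGroup hJ hg, linearPart_add_antilinearPart]
    _ = -(J * (star p * J) + J * (star q * J)) := by rw [star_add]; noncomm_ring
    _ = -(J * J * star p - J * J * star q) := by rw [hp, hq]; noncomm_ring
    _ = star p + -star q := by rw [hJ]; noncomm_ring

theorem linearPart_inv : linearPart R J ↑g⁻¹ = star (linearPart R J g) :=
  linearPart_eq_of_eq_add hJ (coe_inv_eq_star_parts hJ hJs hg)
    (star_linearPart_commute hJ hJs _) (star_antilinearPart_semiconjBy hJ hJs _).neg_left

theorem antilinearPart_inv : antilinearPart R J ↑g⁻¹ = -star (antilinearPart R J g) :=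
  antilinearPart_eq_of_eq_add hJ (coe_inv_eq_star_parts hJ hJs hg)
    (star_linearPart_commute hJ hJs _) (star_antilinearPart_semiconjBy hJ hJs _).neg_left

theorem linearPart_mul_star_self :
    linearPart R J g * star (linearPart R J g) =
      1 + antilinearPart R J g * star (antilinearPart R J g) := by
  have h := linearPart_mul (R := R) hJ (g : A) ((g⁻¹ : Aˣ) : A)
  rw [Units.mul_inv, linearPart_one hJ, linearPart_inv hJ hJs hg, antilinearPart_inv hJ hJs hg,
    mul_neg, ← sub_eq_add_neg] at h
  exact (eq_sub_iff_add_eq.mp h).symm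

theorem star_linearPart_mul_self :
    star (linearPart R J g) * linearPart R J g =
      1 + star (antilinearPart R J g) * antilinearPart R J g := by
  have h := linearPart_mul (R := R) hJ ((g⁻¹ : Aˣ) : A) (g : A)
  rw [Units.inv_mul, linearPart_one hJ, linearPart_inv hJ hJs hg, antilinearPart_inv hJ hJs hg,
    neg_mul, ← sub_eq_add_neg] at h
  exact (eq_sub_iff_add_eq.mp h).symm

theorem linearPart_mul_star_antilinearPart :
    linearPart R J g * star (antilinearPart R J g) =
      antilinearPart R J g * star (linearPart R J g) := by
  have h := antilinearPart_mul (R := R) hJ (g : A) ((g⁻¹ : Aˣ) : A)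
  rw [Units.mul_inv, antilinearPart_one hJ, linearPart_inv hJ hJs hg, antilinearPart_inv hJ hJs hg,
    mul_neg, neg_add_eq_sub] at h
  exact (sub_eq_zero.mp h.symm).symm

theorem antilinearRatio_inv :
    antilinearRatio R J ↑g⁻¹ =
      -star (antilinearPart R J g) * Ring.inverse (star (linearPart R J g)) := by
  rw [antilinearRatio, linearPart_inv hJ hJs hg, antilinearPart_inv hJ hJs hg]

theorem isUnit_linearPart (hA : ∀ a : A, IsUnit (1 + star a * a)) :
    IsUnit (linearPart R J g) := by
  set p := linearPart R J g
  have hleft : IsUnit (star p * p) := star_linearPart_mul_self (R := R) hJ hJs hg ▸ hA _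
  have hright : IsUnit (p * star p) := by
    have h := hA (star (antilinearPart R J g))
    rwa [star_star, ← linearPart_mul_star_self hJ hJs hg] at h
  obtain ⟨b, hb⟩ := hright.exists_right_inv
  obtain ⟨c, hc⟩ := hleft.exists_left_inv
  exact isUnit_iff_exists_and_exists.mpr
    ⟨⟨star p * b, by rw [← mul_assoc, hb]⟩, ⟨c * star p, by rw [mul_assoc, hc]⟩⟩

variable (hp : IsUnit (linearPart R J (g : A)))
include hp

theorem linearPart_mul_antilinearRatio_inv :
    linearPart R J g * antilinearRatio R J ↑g⁻¹ = -antilinearPart R J g := by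
  rw [antilinearRatio_inv hJ hJs hg, ← mul_assoc, mul_neg,
    linearPart_mul_star_antilinearPart hJ hJs hg, neg_mul,
    Ring.mul_inverse_cancel_right _ _ hp.star]

theorem linearPart_add_antilinearPart_mul_antilinearRatio_inv :
    linearPart R J g + antilinearPart R J g * antilinearRatio R J ↑g⁻¹ =
      Ring.inverse (star (linearPart R J g)) := by
  set p := linearPart R J g
  set q := antilinearPart R J g
  calc p + q * antilinearRatio R J ↑g⁻¹
      = p * star p * Ring.inverse (star p) + q * (-star q * Ring.inverse (star p)) := by
        rw [antilinearRatio_inv hJ hJs hg, Ring.mul_inverse_cancel_right _ _ hp.star]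
    _ = (p * star p - q * star q) * Ring.inverse (star p) := by noncomm_ring
    _ = Ring.inverse (star p) := by
        rw [linearPart_mul_star_self hJ hJs hg, add_sub_cancel_right, one_mul]

variable {x : A} (hx : IsUnit (linearPart R J x))
include hx

theorem linearPart_mul_eq_mul_one_sub_mul :
    linearPart R J (g * x) =
      linearPart R J g * (1 - antilinearRatio R J ↑g⁻¹ * antilinearRatio R J x) *
        linearPart R J x := by
  set p := linearPart R J g
  set q := antilinearPart R J g
  set r := linearPart R J x
  set T := antilinearRatio R J x
  set That := antilinearRatio R J ↑g⁻¹
  calc linearPart R J (g * x) = p * r + q * (T * r) := by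
        rw [linearPart_mul hJ, antilinearRatio_mul_linearPart hx]
    _ = p * r - p * That * (T * r) := by
        rw [linearPart_mul_antilinearRatio_inv hJ hJs hg hp, neg_mul, sub_neg_eq_add]
    _ = p * (1 - That * T) * r := by noncomm_ring

variable (hgx : IsUnit (linearPart R J (g * x)))
include hgx

theorem isUnit_one_sub_antilinearRatio_inv_mul :
    IsUnit (1 - antilinearRatio R J ↑g⁻¹ * antilinearRatio R J x) := by
  rw [linearPart_mul_eq_mul_one_sub_mul hJ hJs hg hp hx] at hgx
  obtain ⟨p, hp⟩ := hp
  obtain ⟨r, hr⟩ := hx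
  rwa [← hp, ← hr, Units.isUnit_mul_units, Units.isUnit_units_mul] at hgx

theorem antilinearRatio_mul :
    antilinearRatio R J (g * x) =
      antilinearRatio R J g +
        Ring.inverse (star (linearPart R J g)) * antilinearRatio R J x *
          Ring.inverse (1 - antilinearRatio R J ↑g⁻¹ * antilinearRatio R J x) *
          Ring.inverse (linearPart R J g) := by
  have ha := isUnit_one_sub_antilinearRatio_inv_mul hJ hJs hg hp hx hgx
  refine ((Ring.eq_mul_inverse_iff_mul_eq _ _ _ hgx).mpr ?_).symm
  rw [linearPart_mul_eq_mul_one_sub_mul hJ hJs hg hp hx, antilinearPart_mul hJ,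
    ← linearPart_add_antilinearPart_mul_antilinearRatio_inv hJ hJs hg hp,
    ← antilinearRatio_mul_linearPart hx]
  set p := linearPart R J g
  set q := antilinearPart R J g
  set r := linearPart R J x
  set T := antilinearRatio R J x
  set That := antilinearRatio R J ↑g⁻¹
  set a := 1 - That * T with ha_def
  calc (antilinearRatio R J g + (p + q * That) * T * Ring.inverse a * Ring.inverse p) *
        (p * a * r)
      = antilinearRatio R J g * p * a * r +
          (p + q * That) * T * (Ring.inverse a * (Ring.inverse p * p) * a) * r := by noncomm_ring
    _ = q * a * r + (p + q * That) * T * r := by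
        rw [antilinearRatio_mul_linearPart hp, Ring.inverse_mul_cancel _ hp, mul_one,
          Ring.inverse_mul_cancel _ ha, mul_one]
    _ = p * (T * r) + q * r := by rw [ha_def]; noncomm_ring

end Symplectic

section InnerProductSpace

variable {𝕜 E : Type*} [RCLike 𝕜] [NormedAddCommGroup E] [InnerProductSpace 𝕜 E]
  [FiniteDimensional 𝕜 E]

theorem isUnit_one_add_star_mul_self (a : Module.End 𝕜 E) : IsUnit (1 + star a * a) := by
  rw [LinearMap.isUnit_iff_ker_eq_bot, LinearMap.ker_eq_bot']
  intro v hv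
  have h : inner 𝕜 v v + inner 𝕜 (a v) (a v) = 0 := by
    rw [← LinearMap.adjoint_inner_right, ← inner_add_right]
    exact (congrArg (inner 𝕜 v) hv).trans (inner_zero_right v)
  simp only [inner_self_eq_norm_sq_to_K] at h
  norm_cast at h
  rw [← norm_eq_zero]
  nlinarith [sq_nonneg ‖v‖, sq_nonneg ‖a v‖]

theorem star_mul_mul_eq_of_inner_eq {a b c : Module.End 𝕜 E}
    (h : ∀ u v, inner 𝕜 (b (a u)) (a v) = inner 𝕜 (c u) v) : star a * b * a = c := by
  ext u
  refine ext_inner_right 𝕜 fun v => ?_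
  rw [LinearMap.star_eq_adjoint, Module.End.mul_apply, Module.End.mul_apply,
    LinearMap.adjoint_inner_left, h]

theorem star_eq_neg_of_mul_self_eq_neg_one {J : Module.End 𝕜 E} (hJ : J * J = -1)
    (hJi : ∀ u v, inner 𝕜 (J u) (J v) = inner 𝕜 u v) : star J = -J := by
  have hstar : star J * J = 1 := by
    simpa only [mul_one] using star_mul_mul_eq_of_inner_eq (b := 1) (c := 1) hJi
  exact left_inv_eq_right_inv hstar (by rw [mul_neg, hJ, neg_neg])

end InnerProductSpace

theorem stmt_6_general {R A : Type*} [Field R] [NeZero (2 : R)] [Ring A] [StarRing A] [Algebra R A]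
    (hA : ∀ a : A, IsUnit (1 + star a * a)) {J : A} (hJ : J * J = -1) (hJs : star J = -J)
    {g h : Aˣ} (hg : g ∈ symplecticGroup J) (hh : h ∈ symplecticGroup J) :
    linearPart R J (g * h) =
      linearPart R J g * (1 - antilinearRatio R J ↑g⁻¹ * antilinearRatio R J h) *
        linearPart R J h ∧
    IsUnit (1 - antilinearRatio R J ↑g⁻¹ * antilinearRatio R J h) ∧
    antilinearRatio R J (g * h) =
      antilinearRatio R J g +
        Ring.inverse (star (linearPart R J g)) * antilinearRatio R J h *
          Ring.inverse (1 - antilinearRatio R J ↑g⁻¹ * antilinearRatio R J h) *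
          Ring.inverse (linearPart R J g) := by
  have hp : IsUnit (linearPart R J g) := isUnit_linearPart hJ hJs hg hA
  have hr : IsUnit (linearPart R J h) := isUnit_linearPart hJ hJs hh hA
  have hgh : IsUnit (linearPart R J (g * h)) := isUnit_linearPart hJ hJs (mul_mem hg hh) hA
  exact ⟨linearPart_mul_eq_mul_one_sub_mul hJ hJs hg hp hr,
    isUnit_one_sub_antilinearRatio_inv_mul hJ hJs hg hp hr hgh,
    antilinearRatio_mul hJ hJs hg hp hr hgh⟩

/-- For all `g, h ∈ Sp(V)`:
`p_{gh} = p_g ∘ (1 − T̂_g∘T_h) ∘ p_h`; in particular `1 − T̂_g∘T_h` is invertible, and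
`T_{gh} = T_g + (p_gᵗ)⁻¹ ∘ T_h ∘ (1 − T̂_g∘T_h)⁻¹ ∘ p_g⁻¹`. -/
theorem stmt_6 {V : Type*} [NormedAddCommGroup V] [InnerProductSpace ℝ V]
    [FiniteDimensional ℝ V] (m : ℕ) (hdim : Module.finrank ℝ V = 2 * m)
    (J : Module.End ℝ V) (hJ2 : J * J = -1)
    (hJd : ∀ u v : V, ⟪J u, J v⟫ = ⟪u, v⟫)
    (g h : Module.End ℝ V) (hg : IsUnit g) (hh : IsUnit h)
    (hgs : ∀ u v : V, ⟪J (g u), g v⟫ = ⟪J u, v⟫)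
    (hhs : ∀ u v : V, ⟪J (h u), h v⟫ = ⟪J u, v⟫)
    (pg qg ph qh pgh qgh pg' qg' Tg Th Tgh Tghat : Module.End ℝ V)
    (hpg : pg = (2⁻¹ : ℝ) • (g - J * g * J))
    (hqg : qg = (2⁻¹ : ℝ) • (g + J * g * J))
    (hph : ph = (2⁻¹ : ℝ) • (h - J * h * J))
    (hqh : qh = (2⁻¹ : ℝ) • (h + J * h * J))
    (hpgh : pgh = (2⁻¹ : ℝ) • (g * h - J * (g * h) * J))
    (hqgh : qgh = (2⁻¹ : ℝ) • (g * h + J * (g * h) * J))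
    (hpg' : pg' = (2⁻¹ : ℝ) • (Ring.inverse g - J * Ring.inverse g * J))
    (hqg' : qg' = (2⁻¹ : ℝ) • (Ring.inverse g + J * Ring.inverse g * J))
    (hTg : Tg = qg * Ring.inverse pg)
    (hTh : Th = qh * Ring.inverse ph)
    (hTgh : Tgh = qgh * Ring.inverse pgh)
    (hThat : Tghat = qg' * Ring.inverse pg') :
    pgh = pg * (1 - Tghat * Th) * ph ∧
    IsUnit (1 - Tghat * Th) ∧
    Tgh = Tg + Ring.inverse (LinearMap.adjoint pg) * Th *
      Ring.inverse (1 - Tghat * Th) * Ring.inverse pg := by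
  obtain ⟨g, rfl⟩ := hg
  obtain ⟨h, rfl⟩ := hh
  rw [Ring.inverse_unit] at hpg' hqg'
  subst hTg hTh hTgh hThat hpg hqg hph hqh hpgh hqgh hpg' hqg'
  exact stmt_6_general (R := ℝ) (A := Module.End ℝ V) isUnit_one_add_star_mul_self hJ2
    (star_eq_neg_of_mul_self_eq_neg_one hJ2 hJd)
    (star_mul_mul_eq_of_inner_eq hgs) (star_mul_mul_eq_of_inner_eq hhs)
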